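/- Let G = (V,E) be a finite simple connected graph with minimum degree at least 2 and |V| ≥ 4. Then G has a triangle-free 2-edge-cover, and the minimum size of a triangle-free 2-edge-cover of G equals 2|V| − ν, where ν is the maximum size of a triangle-free 2-matching of G. -/

import Mathlib

namespace ECSS

variable {V : Type*}

/-- The spanning subgraph of the vertex type `V` determined by an edge set `F`,
viewed as a simple graph on `V`. -/
def graphOf (F : Finset (Sym2 V)) : SimpleGraph V :=
  SimpleGraph.fromEdgeSet (F : Set (Sym2 V))

/-- `d_F(v)`: the number of edges of the edge set `F` incident to the vertex `v`. -/
noncomputable def degIn (F : Finset (Sym2 V)) (v : V) : ℕ :=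
  {e ∈ (F : Set (Sym2 V)) | v ∈ e}.ncard

/-- `F` is a 2-matching: every vertex is incident to at most 2 edges of `F`. -/
def IsTwoMatching (F : Finset (Sym2 V)) : Prop :=
  ∀ v : V, degIn F v ≤ 2

/-- `F` is a 2-edge-cover: every vertex is incident to at least 2 edges of `F`. -/
def IsTwoEdgeCover (F : Finset (Sym2 V)) : Prop :=
  ∀ v : V, 2 ≤ degIn F v

/-- The vertices `u, v, w` form a triangle 2EC component of the edge set `F`:
they are pairwise distinct, the three edges joining them all belong to `F`, and no
other edge of `F` is incident to any of them (so `{u, v, w}` is a connected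
component of `(V, F)` which is a cycle of length 3). -/
def IsTriangleComponent (F : Finset (Sym2 V)) (u v w : V) : Prop :=
  u ≠ v ∧ u ≠ w ∧ v ≠ w ∧
  s(u, v) ∈ F ∧ s(u, w) ∈ F ∧ s(v, w) ∈ F ∧
  ∀ e ∈ F, (u ∈ e ∨ v ∈ e ∨ w ∈ e) → e = s(u, v) ∨ e = s(u, w) ∨ e = s(v, w)

/-- An edge set `F` is triangle-free if it has no triangle 2EC component. -/
def TriangleFree (F : Finset (Sym2 V)) : Prop :=
  ¬ ∃ u v w : V, IsTriangleComponent F u v w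

/-- A graph is 2-edge-connected if it has at least two vertices and remains
connected after deleting any single edge. -/
def TwoEdgeConnected {α : Type*} (G : SimpleGraph α) : Prop :=
  2 ≤ Nat.card α ∧ G.Connected ∧ ∀ e ∈ G.edgeSet, (G.deleteEdges {e}).Connected

/-- A graph is a cycle if it is connected and every vertex has degree exactly 2. -/
def IsCycleGraph {α : Type*} (G : SimpleGraph α) : Prop :=
  G.Connected ∧ ∀ v : α, (G.neighborSet v).ncard = 2

/-!
For an edge set `F`, let `coverCost F = |F| + ∑ᵥ max (2 - d_F(v), 0)`. On 2-edge-covers it is the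
size, and on 2-matchings it is `2|V|` minus the size. Hence it suffices to turn a triangle-free
edge set into a triangle-free 2-edge-cover by adding edges, and into a triangle-free 2-matching by
deleting edges, without ever increasing `coverCost`.

*Adding.* Take an edge `e` at a vertex of degree less than 2. If `e` closes a triangle component,
both of its ends were deficient, so the cost went down by one; this pays for an edge leaving the
triangle, which exists because the host graph is triangle-free.

*Deleting.* Take an edge `e` at a vertex of degree more than 2. If deleting `e` isolates a
triangle, then the triangle has a vertex on `e`, whose degree is 3, and deleting instead an edge of
the triangle at that vertex isolates no triangle.
-/

section TriangleComponents

variable {E F F' : Finset (Sym2 V)} {e : Sym2 V} {u v w x y : V}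

/-- The vertex `x` lies on a triangle 2EC component of `F`. -/
def InTriangleComponent (F : Finset (Sym2 V)) (x : V) : Prop :=
  ∃ v w, IsTriangleComponent F x v w

namespace IsTriangleComponent

lemma rotate (h : IsTriangleComponent F u v w) : IsTriangleComponent F v w u := by
  obtain ⟨huv, huw, hvw, euv, euw, evw, hclosed⟩ := h
  refine ⟨hvw, huv.symm, huw.symm, evw, Sym2.eq_swap ▸ euv, Sym2.eq_swap ▸ euw, ?_⟩
  intro e he hmem
  rw [Sym2.eq_swap (a := v) (b := u), Sym2.eq_swap (a := w) (b := u)]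
  have := hclosed e he (by tauto)
  tauto

lemma inTriangleComponent (h : IsTriangleComponent F u v w) (hx : x = u ∨ x = v ∨ x = w) :
    InTriangleComponent F x := by
  rcases hx with rfl | rfl | rfl
  exacts [⟨v, w, h⟩, ⟨w, u, h.rotate⟩, ⟨u, v, h.rotate.rotate⟩]

lemma eq_or_eq_or_eq_of_mem (h : IsTriangleComponent F u v w) (he : e ∈ F)
    (hx : x = u ∨ x = v ∨ x = w) (hxe : x ∈ e) (hye : y ∈ e) : y = u ∨ y = v ∨ y = w := by
  obtain ⟨-, -, -, -, -, -, hclosed⟩ := h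
  have hside : e = s(u, v) ∨ e = s(u, w) ∨ e = s(v, w) :=
    hclosed e he (by rcases hx with rfl | rfl | rfl <;> tauto)
  rcases hside with rfl | rfl | rfl <;> rw [Sym2.mem_iff] at hye <;> tauto

lemma anti (h : IsTriangleComponent F' u v w) (hFF' : F ⊆ F') (huv : s(u, v) ∈ F)
    (huw : s(u, w) ∈ F) (hvw : s(v, w) ∈ F) : IsTriangleComponent F u v w :=
  let ⟨huv_ne, huw_ne, hvw_ne, _, _, _, hclosed⟩ := h
  ⟨huv_ne, huw_ne, hvw_ne, huv, huw, hvw, fun e he ↦ hclosed e (hFF' he)⟩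

lemma of_erase [DecidableEq V] (h : IsTriangleComponent (F.erase e) u v w)
    (hu : u ∉ e) (hv : v ∉ e) (hw : w ∉ e) : IsTriangleComponent F u v w := by
  obtain ⟨huv, huw, hvw, euv, euw, evw, hclosed⟩ := h
  refine ⟨huv, huw, hvw, Finset.mem_of_mem_erase euv, Finset.mem_of_mem_erase euw,
    Finset.mem_of_mem_erase evw, fun f hf hmem ↦ hclosed f (Finset.mem_erase.2 ⟨?_, hf⟩) hmem⟩
  rintro rfl
  tauto

end IsTriangleComponent

namespace InTriangleComponent

lemma degIn_eq_two (h : InTriangleComponent F x) : degIn F x = 2 := by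
  obtain ⟨v, w, hxv, hxw, hvw, exv, exw, -, hclosed⟩ := h
  have hincident : {e ∈ (F : Set (Sym2 V)) | x ∈ e} = {s(x, v), s(x, w)} := by
    ext e
    constructor
    · rintro ⟨he, hx⟩
      rcases hclosed e he (Or.inl hx) with rfl | rfl | rfl
      · exact Or.inl rfl
      · exact Or.inr rfl
      · exact absurd (Sym2.mem_iff.1 hx) (by tauto)
    · rintro (rfl | rfl)
      exacts [⟨exv, Sym2.mem_mk_left x v⟩, ⟨exw, Sym2.mem_mk_left x w⟩]
  rw [degIn, hincident, Set.ncard_pair]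
  exact fun heq ↦ hvw (Sym2.congr_right.1 heq)

lemma of_mem (h : InTriangleComponent F x) (he : e ∈ F) (hx : x ∈ e) (hy : y ∈ e) :
    InTriangleComponent F y := by
  obtain ⟨v, w, hT⟩ := h
  exact hT.inTriangleComponent (hT.eq_or_eq_or_eq_of_mem he (Or.inl rfl) hx hy)

end InTriangleComponent

namespace TriangleFree

lemma exists_new_edge (hF : TriangleFree F) (hFF' : F ⊆ F') (hF' : ¬ TriangleFree F') :
    ∃ u v w, IsTriangleComponent F' u v w ∧ s(u, v) ∉ F := by
  obtain ⟨u, v, w, hT⟩ := not_not.1 hF'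
  by_contra! hold
  refine hF ⟨u, v, w, hT.anti hFF' (hold u v w hT) ?_ (hold v w u hT.rotate)⟩
  exact Sym2.eq_swap ▸ hold w u v hT.rotate.rotate

lemma exists_mem_of_erase [DecidableEq V] (hF : TriangleFree F)
    (hFe : ¬ TriangleFree (F.erase e)) :
    ∃ u v w, IsTriangleComponent (F.erase e) u v w ∧ u ∈ e := by
  obtain ⟨u, v, w, hT⟩ := not_not.1 hFe
  by_contra! hdisj
  exact hF ⟨u, v, w, hT.of_erase (hdisj u v w hT) (hdisj v w u hT.rotate)
    (hdisj w u v hT.rotate.rotate)⟩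

end TriangleFree

lemma IsTriangleComponent.exists_leaving_edge (hT : IsTriangleComponent F u v w)
    (hE : TriangleFree E) (hFE : F ⊆ E) :
    ∃ f ∈ E, f ∉ F ∧ ∃ x ∈ f, x = u ∨ x = v ∨ x = w := by
  obtain ⟨huv, huw, hvw, euv, euw, evw, hclosed⟩ := hT
  by_contra! hnone
  refine hE ⟨u, v, w, huv, huw, hvw, hFE euv, hFE euw, hFE evw, fun f hf hmem ↦ ?_⟩
  by_contra hf_side
  have hfF : f ∉ F := fun hfF ↦ hf_side (hclosed f hfF hmem)
  have huf := hnone f hf hfF u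
  have hvf := hnone f hf hfF v
  have hwf := hnone f hf hfF w
  tauto

end TriangleComponents

section Degrees

variable {E F : Finset (Sym2 V)} {e : Sym2 V} {v : V}

lemma degIn_eq_card_filter [DecidableEq V] (F : Finset (Sym2 V)) (v : V) :
    degIn F v = (F.filter (v ∈ ·)).card := by
  rw [degIn, ← Set.ncard_coe_finset, Finset.coe_filter]
  rfl

lemma degIn_insert [DecidableEq V] (he : e ∉ F) (v : V) :
    degIn (insert e F) v = degIn F v + if v ∈ e then 1 else 0 := by
  simp only [degIn_eq_card_filter, Finset.filter_insert]
  split_ifs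
  · exact Finset.card_insert_of_notMem fun h ↦ he (Finset.mem_of_mem_filter e h)
  · rfl

lemma degIn_insert_of_mem [DecidableEq V] (he : e ∉ F) (hv : v ∈ e) :
    degIn (insert e F) v = degIn F v + 1 := by
  rw [degIn_insert he, if_pos hv]

lemma degIn_erase_add_one [DecidableEq V] (he : e ∈ F) (hv : v ∈ e) :
    degIn (F.erase e) v + 1 = degIn F v := by
  rw [← degIn_insert_of_mem (Finset.notMem_erase e F) hv, Finset.insert_erase he]

lemma degIn_erase_of_notMem [DecidableEq V] (hv : v ∉ e) :
    degIn (F.erase e) v = degIn F v := by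
  rw [degIn_eq_card_filter, degIn_eq_card_filter, Finset.filter_erase, Finset.erase_eq_of_notMem]
  simp [hv]

lemma exists_incident_notMem (h : degIn F v < degIn E v) : ∃ e ∈ E, e ∉ F ∧ v ∈ e := by
  classical
  rw [degIn_eq_card_filter, degIn_eq_card_filter] at h
  obtain ⟨e, heE, heF⟩ := Finset.exists_mem_notMem_of_card_lt_card h
  simp only [Finset.mem_filter] at heE heF
  exact ⟨e, heE.1, fun he ↦ heF ⟨he, heE.2⟩, heE.2⟩

lemma sum_degIn [Fintype V] (hF : ∀ e ∈ F, ¬ e.IsDiag) : ∑ v, degIn F v = 2 * F.card := by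
  classical
  calc ∑ v, degIn F v = ∑ v, (F.filter (v ∈ ·)).card := by simp only [degIn_eq_card_filter]
    _ = ∑ e ∈ F, (Finset.univ.filter (· ∈ e)).card :=
      Finset.sum_card_bipartiteAbove_eq_sum_card_bipartiteBelow (· ∈ ·)
    _ = ∑ _e ∈ F, 2 := Finset.sum_congr rfl fun e he ↦ by
      rw [← Sym2.card_toFinset_of_not_isDiag e (hF e he)]
      congr 1
      ext v
      simp
    _ = 2 * F.card := by rw [Finset.sum_const, smul_eq_mul, mul_comm]

end Degrees

section Cost

variable [Fintype V] {F : Finset (Sym2 V)} {e : Sym2 V} {u v : V}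

/-- The size of `F` plus the total deficiency of the vertices with respect to degree 2 (the
subtraction is truncated). It interpolates between `2|V| - |F|` for 2-matchings and `|F|` for
2-edge-covers. -/
noncomputable def coverCost (F : Finset (Sym2 V)) : ℕ :=
  F.card + ∑ v, (2 - degIn F v)

lemma IsTwoEdgeCover.coverCost_eq (hF : IsTwoEdgeCover F) : coverCost F = F.card := by
  simp [coverCost, fun v ↦ Nat.sub_eq_zero_of_le (hF v)]

lemma IsTwoMatching.coverCost_add_card (hF : IsTwoMatching F) (hloop : ∀ e ∈ F, ¬ e.IsDiag) :
    coverCost F + F.card = 2 * Fintype.card V := by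
  calc coverCost F + F.card = ∑ v, (2 - degIn F v) + ∑ v, degIn F v := by
        rw [sum_degIn hloop, coverCost]
        ring
    _ = ∑ _v : V, 2 := by
        rw [← Finset.sum_add_distrib]
        exact Finset.sum_congr rfl fun v _ ↦ Nat.sub_add_cancel (hF v)
    _ = 2 * Fintype.card V := by rw [Finset.sum_const, smul_eq_mul, mul_comm, Finset.card_univ]

variable [DecidableEq V]

lemma coverCost_insert (he : e ∉ F) :
    coverCost (insert e F) + (e.toFinset.filter (degIn F · < 2)).card = coverCost F + 1 := by
  have hdeficiency : ∑ v, (2 - degIn (insert e F) v) + (e.toFinset.filter (degIn F · < 2)).card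
      = ∑ v, (2 - degIn F v) := by
    have hfilter : e.toFinset.filter (degIn F · < 2)
        = Finset.univ.filter fun v ↦ v ∈ e ∧ degIn F v < 2 := by
      ext v
      simp
    rw [hfilter, Finset.card_filter, ← Finset.sum_add_distrib]
    refine Finset.sum_congr rfl fun v _ ↦ ?_
    rw [degIn_insert he]
    grind
  rw [coverCost, coverCost, Finset.card_insert_of_notMem he]
  omega

lemma coverCost_insert_le_add_one (he : e ∉ F) : coverCost (insert e F) ≤ coverCost F + 1 :=
  (coverCost_insert he).le.trans' (Nat.le_add_right _ _)

lemma coverCost_insert_le (he : e ∉ F) (hv : v ∈ e) (hdeg : degIn F v < 2) :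
    coverCost (insert e F) ≤ coverCost F := by
  have hpos : 0 < (e.toFinset.filter (degIn F · < 2)).card :=
    Finset.card_pos.2 ⟨v, Finset.mem_filter.2 ⟨Sym2.mem_toFinset.2 hv, hdeg⟩⟩
  have := coverCost_insert he
  omega

lemma coverCost_insert_add_one_le (he : s(u, v) ∉ F) (huv : u ≠ v) (hu : degIn F u < 2)
    (hv : degIn F v < 2) : coverCost (insert s(u, v) F) + 1 ≤ coverCost F := by
  have hfilter : s(u, v).toFinset.filter (degIn F · < 2) = {u, v} := by
    rw [Sym2.toFinset_mk_eq, Finset.filter_true_of_mem]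
    simp only [Finset.mem_insert, Finset.mem_singleton]
    rintro x (rfl | rfl) <;> assumption
  have hcost := coverCost_insert he
  rw [hfilter, Finset.card_pair huv] at hcost
  omega

lemma coverCost_erase_le (he : e ∈ F) (hu : u ∈ e) (hdeg : 2 < degIn F u) :
    coverCost (F.erase e) ≤ coverCost F := by
  have hcost := coverCost_insert (Finset.notMem_erase e F)
  rw [Finset.insert_erase he] at hcost
  have hdeg_erase := degIn_erase_add_one he hu
  obtain ⟨v, rfl⟩ := hu
  have hfilter : s(u, v).toFinset.filter (degIn (F.erase s(u, v)) · < 2) ⊆ {v} := by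
    intro x hx
    obtain ⟨hx, hdeg_x⟩ := Finset.mem_filter.1 hx
    rcases Sym2.mem_iff.1 (Sym2.mem_toFinset.1 hx) with rfl | rfl
    · omega
    · exact Finset.mem_singleton_self x
  have hcard := Finset.card_le_card hfilter
  rw [Finset.card_singleton] at hcard
  omega

end Cost

section Covers

variable {E F : Finset (Sym2 V)} {f : Sym2 V} {u v w x : V}

lemma TriangleFree.insert_leaving_edge [DecidableEq V] (hF : TriangleFree F)
    (hT : IsTriangleComponent (insert s(u, v) F) u v w) (hf : f ∉ insert s(u, v) F)
    (hxf : x ∈ f) (hx : x = u ∨ x = v ∨ x = w) :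
    TriangleFree (insert f (insert s(u, v) F)) := by
  have hxT' : ¬ InTriangleComponent (insert f (insert s(u, v) F)) x := by
    intro h
    have hdeg := h.degIn_eq_two
    rw [degIn_insert_of_mem hf hxf, (hT.inTriangleComponent hx).degIn_eq_two] at hdeg
    omega
  by_contra hF'
  obtain ⟨a, b, c, hT', hab⟩ := hF.exists_new_edge
    ((Finset.subset_insert _ _).trans (Finset.subset_insert _ _)) hF'
  obtain ⟨-, -, -, -, huw, -⟩ := hT
  obtain ⟨-, -, -, hab_mem, -⟩ := id hT'
  have ha : InTriangleComponent (insert f (insert s(u, v) F)) a := ⟨b, c, hT'⟩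
  rcases Finset.mem_insert.1 hab_mem with rfl | hab_mem
  · exact hxT' (ha.of_mem (Finset.mem_insert_self _ _) (Sym2.mem_mk_left a b) hxf)
  have hab_eq : s(a, b) = s(u, v) := (Finset.mem_insert.1 hab_mem).resolve_right hab
  have huv_mem : s(u, v) ∈ insert f (insert s(u, v) F) := by simp
  have hua := ha.of_mem huv_mem (hab_eq ▸ Sym2.mem_mk_left a b) (Sym2.mem_mk_left u v)
  rcases hx with rfl | rfl | rfl
  · exact hxT' hua
  · exact hxT' (hua.of_mem huv_mem (Sym2.mem_mk_left u x) (Sym2.mem_mk_right u x))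
  · exact hxT' (hua.of_mem (Finset.mem_insert_of_mem huw) (Sym2.mem_mk_left u x)
      (Sym2.mem_mk_right u x))

variable [Fintype V]

lemma TriangleFree.exists_ssuperset_coverCost_le (hF : TriangleFree F) (hFE : F ⊆ E)
    (hE : IsTwoEdgeCover E) (hEtf : TriangleFree E) (hFcov : ¬ IsTwoEdgeCover F) :
    ∃ F' ⊆ E, F ⊂ F' ∧ TriangleFree F' ∧ coverCost F' ≤ coverCost F := by
  classical
  obtain ⟨x, hx⟩ : ∃ x, degIn F x < 2 := by simpa [IsTwoEdgeCover] using hFcov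
  obtain ⟨e, heE, heF, hxe⟩ := exists_incident_notMem (hx.trans_le (hE x))
  have hins : insert e F ⊆ E := Finset.insert_subset heE hFE
  by_cases hetf : TriangleFree (insert e F)
  · exact ⟨insert e F, hins, Finset.ssubset_insert heF, hetf, coverCost_insert_le heF hxe hx⟩
  obtain ⟨u, v, w, hT, huv_notMem⟩ := hF.exists_new_edge (Finset.subset_insert e F) hetf
  obtain ⟨huv, -, -, huv_mem, -⟩ := id hT
  obtain rfl : s(u, v) = e := (Finset.mem_insert.1 huv_mem).resolve_right huv_notMem
  have hu := (hT.inTriangleComponent (Or.inl rfl)).degIn_eq_two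
  have hv := (hT.inTriangleComponent (Or.inr (Or.inl rfl))).degIn_eq_two
  rw [degIn_insert_of_mem heF (Sym2.mem_mk_left u v)] at hu
  rw [degIn_insert_of_mem heF (Sym2.mem_mk_right u v)] at hv
  have hgain := coverCost_insert_add_one_le heF huv (by omega) (by omega)
  obtain ⟨f, hfE, hf, y, hyf, hy⟩ := hT.exists_leaving_edge hEtf hins
  exact ⟨insert f (insert s(u, v) F), Finset.insert_subset hfE hins,
    (Finset.ssubset_insert heF).trans (Finset.ssubset_insert hf),
    hF.insert_leaving_edge hT hf hyf hy, (coverCost_insert_le_add_one hf).trans hgain⟩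

lemma TriangleFree.exists_isTwoEdgeCover_coverCost_le (hF : TriangleFree F)
    (hFE : F ⊆ E) (hE : IsTwoEdgeCover E) (hEtf : TriangleFree E) :
    ∃ C ⊆ E, IsTwoEdgeCover C ∧ TriangleFree C ∧ coverCost C ≤ coverCost F := by
  induction F using WellFoundedGT.induction with
  | _ F ih =>
    by_cases hFcov : IsTwoEdgeCover F
    · exact ⟨F, hFE, hFcov, hF, le_rfl⟩
    obtain ⟨F', hF'E, hFF', hF'tf, hcost⟩ :=
      hF.exists_ssuperset_coverCost_le hFE hE hEtf hFcov
    obtain ⟨C, hCE, hC, hCtf, hC_cost⟩ := ih F' hFF' hF'tf hF'E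
    exact ⟨C, hCE, hC, hCtf, hC_cost.trans hcost⟩

end Covers

section Matchings

variable {F : Finset (Sym2 V)} {e : Sym2 V} {u v w : V}

lemma TriangleFree.erase_side [DecidableEq V] (hF : TriangleFree F) (hue : u ∈ e)
    (hT : IsTriangleComponent (F.erase e) u v w) : TriangleFree (F.erase s(u, v)) := by
  obtain ⟨huv, huw, hvw, euv, euw, evw, -⟩ := id hT
  have hv_notMem : v ∉ e := fun hve ↦
    Finset.ne_of_mem_erase euv ((Sym2.mem_and_mem_iff huv).1 ⟨hue, hve⟩).symm
  have euw' : s(u, w) ∈ F.erase s(u, v) :=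
    Finset.mem_erase.2 ⟨fun h ↦ hvw (Sym2.congr_right.1 h).symm, Finset.mem_of_mem_erase euw⟩
  have evw' : s(v, w) ∈ F.erase s(u, v) := by
    rw [Sym2.eq_swap (a := u), Finset.mem_erase]
    exact ⟨fun h ↦ huw (Sym2.congr_right.1 h).symm, Finset.mem_of_mem_erase evw⟩
  have hv : ¬ InTriangleComponent (F.erase s(u, v)) v := by
    intro h
    have hdeg := degIn_erase_add_one (Finset.mem_of_mem_erase euv) (Sym2.mem_mk_right u v)
    have hdeg_v := (hT.inTriangleComponent (Or.inr (Or.inl rfl))).degIn_eq_two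
    rw [degIn_erase_of_notMem hv_notMem] at hdeg_v
    rw [h.degIn_eq_two, hdeg_v] at hdeg
    omega
  have hu : ¬ InTriangleComponent (F.erase s(u, v)) u := fun h ↦
    hv ((h.of_mem euw' (Sym2.mem_mk_left u w) (Sym2.mem_mk_right u w)).of_mem evw'
      (Sym2.mem_mk_right v w) (Sym2.mem_mk_left v w))
  by_contra hF'
  obtain ⟨a, b, c, hT', ha⟩ := hF.exists_mem_of_erase hF'
  rcases Sym2.mem_iff.1 ha with rfl | rfl
  exacts [hu ⟨b, c, hT'⟩, hv ⟨b, c, hT'⟩]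

variable [Fintype V]

lemma TriangleFree.exists_ssubset_coverCost_le (hF : TriangleFree F)
    (hFmatch : ¬ IsTwoMatching F) :
    ∃ F' ⊂ F, TriangleFree F' ∧ coverCost F' ≤ coverCost F := by
  classical
  obtain ⟨x, hx⟩ : ∃ x, 2 < degIn F x := by simpa [IsTwoMatching] using hFmatch
  obtain ⟨e, he, hxe⟩ : ∃ e ∈ F, x ∈ e := by
    have hpos : 0 < degIn F x := by omega
    rwa [degIn_eq_card_filter, Finset.card_pos, Finset.filter_nonempty_iff] at hpos
  by_cases hetf : TriangleFree (F.erase e)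
  · exact ⟨F.erase e, Finset.erase_ssubset he, hetf, coverCost_erase_le he hxe hx⟩
  obtain ⟨u, v, w, hT, hue⟩ := hF.exists_mem_of_erase hetf
  have huv_mem : s(u, v) ∈ F := by
    obtain ⟨-, -, -, huv_mem, -⟩ := hT
    exact Finset.mem_of_mem_erase huv_mem
  have hu : 2 < degIn F u := by
    rw [← degIn_erase_add_one he hue, (hT.inTriangleComponent (Or.inl rfl)).degIn_eq_two]
    omega
  exact ⟨F.erase s(u, v), Finset.erase_ssubset huv_mem, hF.erase_side hue hT,
    coverCost_erase_le huv_mem (Sym2.mem_mk_left u v) hu⟩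

lemma TriangleFree.exists_isTwoMatching_coverCost_le (hF : TriangleFree F) :
    ∃ M ⊆ F, IsTwoMatching M ∧ TriangleFree M ∧ coverCost M ≤ coverCost F := by
  induction F using Finset.strongInduction with
  | H F ih =>
    by_cases hFmatch : IsTwoMatching F
    · exact ⟨F, subset_rfl, hFmatch, hF, le_rfl⟩
    obtain ⟨F', hF'F, hF'tf, hcost⟩ := hF.exists_ssubset_coverCost_le hFmatch
    obtain ⟨M, hMF', hM, hMtf, hM_cost⟩ := ih F' hF'F hF'tf
    exact ⟨M, hMF'.trans hF'F.subset, hM, hMtf, hM_cost.trans hcost⟩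

end Matchings

section HostGraph

variable (G : SimpleGraph V) [Fintype G.edgeSet]

lemma degIn_edgeFinset (v : V) : degIn G.edgeFinset v = (G.neighborSet v).ncard := by
  classical
  rw [degIn, SimpleGraph.coe_edgeFinset]
  exact Nat.card_congr (G.incidenceSetEquivNeighborSet v)

variable {G}

lemma triangleFree_edgeFinset_of_preconnected [Fintype V] (hG : G.Preconnected)
    (hV : 3 < Fintype.card V) : TriangleFree G.edgeFinset := by
  classical
  rintro ⟨u, v, w, hT⟩
  obtain ⟨y, hy⟩ : ∃ y, y ∉ ({u, v, w} : Finset V) := by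
    by_contra! hall
    rw [← Finset.card_univ, ← Finset.eq_univ_of_forall hall] at hV
    exact hV.not_ge Finset.card_le_three
  obtain ⟨p⟩ := hG u y
  obtain ⟨d, -, hfst, hsnd⟩ := p.exists_boundary_dart {x | x = u ∨ x = v ∨ x = w} (Or.inl rfl)
    (by simpa using hy)
  exact hsnd (hT.eq_or_eq_or_eq_of_mem (SimpleGraph.mem_edgeFinset.2 d.edge_mem) hfst
    (Sym2.mem_mk_left _ _) (Sym2.mem_mk_right _ _))

end HostGraph

theorem min_triangleFree_twoEdgeCover_general
    {V : Type*} [Fintype V] (G : SimpleGraph V) [Fintype G.edgeSet]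
    (hcov : IsTwoEdgeCover G.edgeFinset)
    (htf : TriangleFree G.edgeFinset)
    (ν : ℕ)
    (hν : IsGreatest {n : ℕ | ∃ M : Finset (Sym2 V), (M : Set (Sym2 V)) ⊆ G.edgeSet ∧
      IsTwoMatching M ∧ TriangleFree M ∧ M.card = n} ν) :
    IsLeast {n : ℕ | ∃ C : Finset (Sym2 V), (C : Set (Sym2 V)) ⊆ G.edgeSet ∧
      IsTwoEdgeCover C ∧ TriangleFree C ∧ C.card = n} (2 * Fintype.card V - ν) := by
  have coverCost_matching {M : Finset (Sym2 V)} (hMG : (M : Set (Sym2 V)) ⊆ G.edgeSet)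
      (hM : IsTwoMatching M) : coverCost M + M.card = 2 * Fintype.card V :=
    hM.coverCost_add_card fun e he ↦ G.not_isDiag_of_mem_edgeSet (hMG he)
  have lower_bound {C : Finset (Sym2 V)} (hCG : (C : Set (Sym2 V)) ⊆ G.edgeSet)
      (hC : IsTwoEdgeCover C) (hCtf : TriangleFree C) : 2 * Fintype.card V - ν ≤ C.card := by
    obtain ⟨M, hMC, hM, hMtf, hcost⟩ := hCtf.exists_isTwoMatching_coverCost_le
    have hMG : (M : Set (Sym2 V)) ⊆ G.edgeSet := (Finset.coe_subset.2 hMC).trans hCG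
    have hMν : M.card ≤ ν := hν.2 ⟨M, hMG, hM, hMtf, rfl⟩
    rw [hC.coverCost_eq] at hcost
    have := coverCost_matching hMG hM
    omega
  constructor
  · obtain ⟨M, hMG, hM, hMtf, rfl⟩ := hν.1
    obtain ⟨C, hCE, hC, hCtf, hcost⟩ :=
      hMtf.exists_isTwoEdgeCover_coverCost_le (Set.subset_toFinset.2 hMG) hcov htf
    have hCG : (C : Set (Sym2 V)) ⊆ G.edgeSet := Set.subset_toFinset.1 hCE
    rw [hC.coverCost_eq, Nat.eq_sub_of_add_eq (coverCost_matching hMG hM)] at hcost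
    exact ⟨C, hCG, hC, hCtf, hcost.antisymm (lower_bound hCG hC hCtf)⟩
  · rintro _ ⟨C, hCG, hC, hCtf, rfl⟩
    exact lower_bound hCG hC hCtf

/-- Let `G` be a finite simple connected graph with minimum degree
at least 2 and `|V| ≥ 4`. Then `G` has a triangle-free 2-edge-cover, and the
minimum size of a triangle-free 2-edge-cover of `G` equals `2|V| - ν`, where `ν`
is the maximum size of a triangle-free 2-matching of `G`. -/
theorem min_triangleFree_twoEdgeCover
    {V : Type*} [Fintype V] (G : SimpleGraph V)
    (hconn : G.Connected)
    (hmin : ∀ v : V, 2 ≤ (G.neighborSet v).ncard)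
    (hV : 4 ≤ Fintype.card V)
    (ν : ℕ)
    (hν : IsGreatest {n : ℕ | ∃ M : Finset (Sym2 V), (M : Set (Sym2 V)) ⊆ G.edgeSet ∧
      IsTwoMatching M ∧ TriangleFree M ∧ M.card = n} ν) :
    IsLeast {n : ℕ | ∃ C : Finset (Sym2 V), (C : Set (Sym2 V)) ⊆ G.edgeSet ∧
      IsTwoEdgeCover C ∧ TriangleFree C ∧ C.card = n} (2 * Fintype.card V - ν) := by
  classical
  exact min_triangleFree_twoEdgeCover_general G
    (fun v ↦ (hmin v).trans_eq (degIn_edgeFinset G v).symm)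
    (triangleFree_edgeFinset_of_preconnected hconn.preconnected hV) ν hν

end ECSS
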